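/- Let m, d ∈ ℕ with m ≥ d ≥ 2 and N = m^d. Set C = 2^(23/12)·e^(1/6)/√(ln 2), K = ⌊((d−1)/2)·log₂ m⌋, δ_K = 2^(−K)·d/m, and D = 2·C·d·√(N/m)·( 5·(1 + √2/2)·√(2 ln 2) + √(ln(4e·m/d))·√2/(√2 − 1) ). Let P be a jittered sampling point set of N points in [0,1)^d. Then for all real ℓ ≥ 1, Pr[ D*(P) ≥ ℓ·D + N·δ_K ] ≤ 3.7 · 4^(−ℓ). -/

import Mathlib

open MeasureTheory ProbabilityTheory Real

noncomputable section

/-- The axis-aligned cube `∏_i [x_i/m, x_i/m + 1/m)` of the `m`-grid partition of `[0,1)^d`. -/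
def jitterCube (m d : ℕ) (x : Fin d → Fin m) : Set (Fin d → ℝ) :=
  Set.univ.pi fun i => Set.Ico ((x i : ℝ) / m) ((x i : ℝ) / m + 1 / m)

/-- The distribution of a jittered sampling point configuration: independently, one point
uniformly distributed in each of the `m^d` cubes. -/
def jitterMeasure (m d : ℕ) : Measure ((Fin d → Fin m) → (Fin d → ℝ)) :=
  Measure.pi fun x => ((m : ENNReal) ^ d) • volume.restrict (jitterCube m d x)

open scoped Classical in
/-- Signed (non-normalized) discrepancy `|P ∩ A| - N·λ(A)` with `N = m^d` of a point
configuration `P`. -/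
def jdisc (m d : ℕ) (P : (Fin d → Fin m) → (Fin d → ℝ)) (A : Set (Fin d → ℝ)) : ℝ :=
  ((Finset.univ.filter fun x => P x ∈ A).card : ℝ) - (m : ℝ) ^ d * (volume A).toReal

/-- The anchored box `[0,y) = ∏_i [0, y_i)`. -/
def anchoredBox (d : ℕ) (y : Fin d → ℝ) : Set (Fin d → ℝ) :=
  Set.univ.pi fun i => Set.Ico 0 (y i)

/-- The (non-normalized) star discrepancy `D*(P) = sup_{y ∈ [0,1)^d} |disc([0,y))|`. -/
def starDisc (m d : ℕ) (P : (Fin d → Fin m) → (Fin d → ℝ)) : ℝ :=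
  ⨆ y : {y : Fin d → ℝ // ∀ i, y i ∈ Set.Ico (0 : ℝ) 1}, |jdisc m d P (anchoredBox d y.1)|

/-- The expected star discrepancy of a jittered sampling point set of `m^d` points. -/
def expStarDisc (m d : ℕ) : ℝ :=
  ∫ P, starDisc m d P ∂(jitterMeasure m d)

/-!
Chaining along a dyadic sequence of logarithmic grids. A grid of resolution `q` brackets every
anchored box between two grid boxes whose volumes differ by at most `2 / q`, and it has at most
`(2 * e * q ^ (3 / 2)) ^ d` points. A box of the grid of resolution `2 * q` is a box of the grid of
resolution `q` plus a link of volume at most `1 / q`. The discrepancy of a link is a sum of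
independent centered indicators, one for each cube, of variance `O(N / q)`, so that Bernstein's
inequality and a union bound control all links at once. At the coarsest resolution `m / d` the
volume bound is useless; there the variance is small because the boundary of an anchored box meets
only `O(d * N / m)` cubes. The deviations decrease geometrically along the chain, which is stopped
when `2 * N / q` is of their order.
-/

section Bernstein

variable {Ω ι : Type*} {mΩ : MeasurableSpace Ω} {μ : Measure Ω}

theorem mgf_le_exp_sq_mul_variance [IsProbabilityMeasure μ] {X : Ω → ℝ} (hX : AEMeasurable X μ)
    (hX1 : ∀ᵐ ω ∂μ, |X ω| ≤ 1) (hX0 : μ[X] = 0) {s : ℝ} (hs : |s| ≤ 1) :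
    mgf X μ s ≤ exp (s ^ 2 * Var[X; μ]) := by
  have hXint : Integrable X μ := .of_bound hX.aestronglyMeasurable 1 hX1
  have hX2int : Integrable (fun ω => X ω ^ 2) μ :=
    .of_bound (hX.pow_const 2).aestronglyMeasurable 1 <| hX1.mono fun ω hω => by
      simpa using hω
  have hexp : ∀ᵐ ω ∂μ, exp (s * X ω) ≤ 1 + s * X ω + s ^ 2 * X ω ^ 2 :=
    hX1.mono fun ω hω => by
      have hsX : |s * X ω| ≤ 1 := by
        rw [abs_mul]
        exact mul_le_one₀ hs (abs_nonneg _) hω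
      linarith [le_of_abs_le (abs_exp_sub_one_sub_id_le hsX), mul_pow s (X ω) 2]
  calc mgf X μ s ≤ ∫ ω, (1 + s * X ω + s ^ 2 * X ω ^ 2) ∂μ :=
        integral_mono_ae (integrable_exp_mul_of_mem_Icc hX (hX1.mono fun _ => abs_le.1))
          (((integrable_const 1).add (hXint.const_mul s)).add (hX2int.const_mul _)) hexp
    _ = s ^ 2 * Var[X; μ] + 1 := by
        rw [integral_add (f := fun ω => 1 + s * X ω)
            ((integrable_const 1).add (hXint.const_mul s)) (hX2int.const_mul _),
          integral_add (integrable_const 1) (hXint.const_mul s), integral_const_mul,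
          integral_const_mul, hX0, variance_of_integral_eq_zero hX hX0]
        simp [add_comm]
    _ ≤ exp (s ^ 2 * Var[X; μ]) := add_one_le_exp _

theorem mgf_sum_le_exp_sq_mul_variance {X : ι → Ω → ℝ} (hind : iIndepFun X μ)
    (hX : ∀ i, AEMeasurable (X i) μ) (hX1 : ∀ i, ∀ᵐ ω ∂μ, |X i ω| ≤ 1)
    (hX0 : ∀ i, μ[X i] = 0) (S : Finset ι) {s : ℝ} (hs : |s| ≤ 1) :
    mgf (∑ i ∈ S, X i) μ s ≤ exp (s ^ 2 * Var[∑ i ∈ S, X i; μ]) := by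
  have := hind.isProbabilityMeasure
  rw [hind.mgf_sum₀ hX, IndepFun.variance_sum
    (fun i _ => MemLp.of_bound (hX i).aestronglyMeasurable 1 (hX1 i))
    fun i _ j _ hij => hind.indepFun hij, Finset.mul_sum, exp_sum]
  exact Finset.prod_le_prod (fun i _ => mgf_nonneg) fun i _ =>
    mgf_le_exp_sq_mul_variance (hX i) (hX1 i) (hX0 i) hs

theorem exists_chernoff_parameter {R t v : ℝ} (hR : 0 ≤ R) (hv : 0 ≤ v)
    (ht : 2 * √(v * R) + 2 * R ≤ t) : ∃ s ∈ Set.Icc (0 : ℝ) 1, -s * t + s ^ 2 * v ≤ -R := by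
  rcases lt_or_ge R v with hRv | hvR
  · have hv' : 0 < v := hR.trans_lt hRv
    have hsq : √(R / v) ^ 2 * v = R := by
      rw [sq_sqrt (by positivity), div_mul_cancel₀ _ hv'.ne']
    have hmul : √(R / v) * √(v * R) = R := by
      rw [← sqrt_mul (by positivity), div_mul_eq_mul_div, mul_div_assoc,
        mul_div_cancel_left₀ _ hv'.ne', sqrt_mul_self hR]
    refine ⟨√(R / v), ⟨sqrt_nonneg _, sqrt_le_one.2 ((div_le_one hv').2 hRv.le)⟩, ?_⟩
    nlinarith [mul_le_mul_of_nonneg_left ht (sqrt_nonneg (R / v)),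
      mul_nonneg (sqrt_nonneg (R / v)) hR]
  · have hvsqrt : v ≤ √(v * R) := le_sqrt_of_sq_le (by nlinarith)
    exact ⟨1, by simp, by linarith⟩

theorem measure_abs_sum_ge_le_of_iIndepFun {X : ι → Ω → ℝ} (hind : iIndepFun X μ)
    (hX : ∀ i, Measurable (X i)) (hX1 : ∀ i, ∀ᵐ ω ∂μ, |X i ω| ≤ 1)
    (hX0 : ∀ i, μ[X i] = 0) (S : Finset ι) {R t v : ℝ} (hR : 0 ≤ R)
    (hv : Var[∑ i ∈ S, X i; μ] ≤ v) (ht : 2 * √(v * R) + 2 * R ≤ t) :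
    μ.real {ω | t ≤ |(∑ i ∈ S, X i) ω|} ≤ 2 * exp (-R) := by
  have := hind.isProbabilityMeasure
  obtain ⟨s, ⟨hs0, hs1⟩, hs⟩ := exists_chernoff_parameter hR ((variance_nonneg _ _).trans hv) ht
  have hint (r : ℝ) : Integrable (fun ω => exp (r * (∑ i ∈ S, X i) ω)) μ :=
    hind.integrable_exp_mul_sum hX fun i _ =>
      integrable_exp_mul_of_mem_Icc (hX i).aemeasurable ((hX1 i).mono fun _ => abs_le.1)
  have htail {r : ℝ} (hr : r ^ 2 = s ^ 2) (hr1 : |r| ≤ 1) :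
      exp (-s * t) * mgf (∑ i ∈ S, X i) μ r ≤ exp (-R) := by
    calc exp (-s * t) * mgf (∑ i ∈ S, X i) μ r
        ≤ exp (-s * t) * exp (s ^ 2 * v) := by
          grw [mgf_sum_le_exp_sq_mul_variance hind (fun i => (hX i).aemeasurable) hX1 hX0 S hr1,
            hr, hv]
      _ ≤ exp (-R) := by rwa [← exp_add, exp_le_exp]
  have hupper : μ.real {ω | t ≤ (∑ i ∈ S, X i) ω} ≤ exp (-R) :=
    (measure_ge_le_exp_mul_mgf t hs0 (hint s)).trans (htail rfl (abs_le.2 ⟨by linarith, hs1⟩))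
  have hlower : μ.real {ω | (∑ i ∈ S, X i) ω ≤ -t} ≤ exp (-R) := by
    refine (measure_le_le_exp_mul_mgf (-t) (neg_nonpos.2 hs0) (hint (-s))).trans ?_
    rw [neg_neg, mul_neg, ← neg_mul]
    exact htail (neg_sq s) (abs_le.2 ⟨by linarith, by linarith⟩)
  calc μ.real {ω | t ≤ |(∑ i ∈ S, X i) ω|}
      ≤ μ.real ({ω | t ≤ (∑ i ∈ S, X i) ω} ∪ {ω | (∑ i ∈ S, X i) ω ≤ -t}) :=
        measureReal_mono fun ω (hω : t ≤ |(∑ i ∈ S, X i) ω|) => (le_abs.1 hω).imp_right le_neg.1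
    _ ≤ exp (-R) + exp (-R) := (measureReal_union_le _ _).trans (add_le_add hupper hlower)
    _ = 2 * exp (-R) := (two_mul _).symm

end Bernstein

section CenteredIndicator

variable {Ω : Type*} {mΩ : MeasurableSpace Ω} {μ : Measure Ω} {A : Set Ω}

/-- The centered indicator `𝟙_A - μ(A)`, the contribution of a single `μ`-distributed point to the
discrepancy of `A`. -/
def centeredIndicator (μ : Measure Ω) (A : Set Ω) (ω : Ω) : ℝ :=
  A.indicator 1 ω - μ.real A

theorem measurable_centeredIndicator (hA : MeasurableSet A) :
    Measurable (centeredIndicator μ A) :=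
  (measurable_one.indicator hA).sub_const _

theorem abs_centeredIndicator_le_one [IsProbabilityMeasure μ] (ω : Ω) :
    |centeredIndicator μ A ω| ≤ 1 := by
  have h0 : 0 ≤ μ.real A := measureReal_nonneg
  have h1 : μ.real A ≤ 1 := measureReal_le_one
  by_cases hω : ω ∈ A <;> simp only [centeredIndicator, hω, Set.indicator_of_mem,
    Set.indicator_of_notMem, not_false_eq_true, Pi.one_apply, abs_le] <;> constructor <;> linarith

theorem memLp_indicator_one [IsFiniteMeasure μ] (hA : MeasurableSet A) :
    MemLp (A.indicator 1 : Ω → ℝ) 2 μ :=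
  (memLp_const (1 : ℝ)).indicator hA

theorem integral_centeredIndicator [IsProbabilityMeasure μ] (hA : MeasurableSet A) :
    μ[centeredIndicator μ A] = 0 := by
  simp_rw [centeredIndicator]
  rw [integral_sub ((memLp_indicator_one hA).integrable one_le_two) (integrable_const _),
    integral_indicator_one hA]
  simp

theorem variance_centeredIndicator [IsProbabilityMeasure μ] (hA : MeasurableSet A) :
    Var[centeredIndicator μ A; μ] = μ.real A * (1 - μ.real A) := by
  have hsq : (A.indicator 1 : Ω → ℝ) ^ 2 = A.indicator 1 := by
    ext ω
    by_cases hω : ω ∈ A <;> simp [hω]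
  have hL2 : MemLp (A.indicator 1 : Ω → ℝ) 2 μ := memLp_indicator_one hA
  calc Var[centeredIndicator μ A; μ] = Var[(A.indicator 1 : Ω → ℝ); μ] :=
        variance_sub_const hL2.aestronglyMeasurable _
    _ = μ.real A * (1 - μ.real A) := by
        rw [variance_eq_sub hL2, hsq, integral_indicator_one hA]
        ring

end CenteredIndicator

section AnchoredBox

variable {d : ℕ} {y z : Fin d → ℝ}

theorem mem_anchoredBox_iff {p : Fin d → ℝ} :
    p ∈ anchoredBox d y ↔ ∀ i, 0 ≤ p i ∧ p i < y i := by
  simp [anchoredBox]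

theorem measurableSet_anchoredBox (y : Fin d → ℝ) : MeasurableSet (anchoredBox d y) :=
  .univ_pi fun _ => measurableSet_Ico

theorem anchoredBox_mono (h : y ≤ z) : anchoredBox d y ⊆ anchoredBox d z :=
  Set.pi_mono fun i _ => Set.Ico_subset_Ico_right (h i)

theorem volume_anchoredBox_ne_top (y : Fin d → ℝ) : volume (anchoredBox d y) ≠ ⊤ := by
  rw [anchoredBox, volume_pi_Ico]
  exact ENNReal.prod_ne_top fun _ _ => ENNReal.ofReal_ne_top

theorem volumeReal_anchoredBox (hy : 0 ≤ y) : volume.real (anchoredBox d y) = ∏ i, y i :=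
  (volume_pi_Ico_toReal hy).trans (by simp)

end AnchoredBox

section JitteredSampling

variable {m d : ℕ} {A B : Set (Fin d → ℝ)}

/-- The uniform distribution on the cube `jitterCube m d x`; `jitterMeasure` is the product of
these. -/
def cubeMeasure (m d : ℕ) (x : Fin d → Fin m) : Measure (Fin d → ℝ) :=
  (m : ENNReal) ^ d • volume.restrict (jitterCube m d x)

theorem jitterMeasure_eq_pi : jitterMeasure m d = Measure.pi (cubeMeasure m d) := rfl

theorem measurableSet_jitterCube (x : Fin d → Fin m) : MeasurableSet (jitterCube m d x) :=
  .univ_pi fun _ => measurableSet_Ico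

theorem jdisc_eq_sum_indicator (P : (Fin d → Fin m) → Fin d → ℝ) (A : Set (Fin d → ℝ)) :
    jdisc m d P A = ∑ x, A.indicator 1 (P x) - m ^ d * volume.real A := by
  classical
  simp [jdisc, measureReal_def, Set.indicator_apply, Finset.sum_boole]

variable [NeZero m]

instance isProbabilityMeasure_cubeMeasure (x : Fin d → Fin m) :
    IsProbabilityMeasure (cubeMeasure m d x) := by
  have hm : (0 : ℝ) < m := Nat.cast_pos.2 (NeZero.pos m)
  refine ⟨?_⟩
  rw [cubeMeasure, Measure.smul_apply, Measure.restrict_apply_univ, jitterCube, volume_pi_Ico]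
  simp only [add_sub_cancel_left, Finset.prod_const, Finset.card_univ, Fintype.card_fin]
  rw [smul_eq_mul, ← mul_pow, one_div, ENNReal.ofReal_inv_of_pos hm, ENNReal.ofReal_natCast,
    ENNReal.mul_inv_cancel (Nat.cast_ne_zero.2 (NeZero.ne m)) (ENNReal.natCast_ne_top m), one_pow]

instance isProbabilityMeasure_jitterMeasure : IsProbabilityMeasure (jitterMeasure m d) :=
  jitterMeasure_eq_pi ▸ inferInstance

theorem mem_jitterCube_iff {x : Fin d → Fin m} {p : Fin d → ℝ} :
    p ∈ jitterCube m d x ↔ ∀ i, ⌊p i * m⌋ = ((x i : ℕ) : ℤ) := by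
  have hm : (0 : ℝ) < m := Nat.cast_pos.2 (NeZero.pos m)
  simp only [jitterCube, Set.mem_univ_pi, Set.mem_Ico, ← add_div, div_le_iff₀ hm, lt_div_iff₀ hm,
    Int.floor_eq_iff, Int.cast_natCast]

theorem pairwise_disjoint_jitterCube : Pairwise (Function.onFun Disjoint (jitterCube m d)) := by
  intro x y hxy
  refine Set.disjoint_left.2 fun p hpx hpy => hxy ?_
  rw [mem_jitterCube_iff] at hpx hpy
  ext i
  exact_mod_cast (hpx i).symm.trans (hpy i)

theorem iUnion_jitterCube : ⋃ x, jitterCube m d x = anchoredBox d 1 := by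
  have hm : (0 : ℝ) < m := Nat.cast_pos.2 (NeZero.pos m)
  have hrange (r : ℝ) : 0 ≤ r ∧ r < 1 ↔ 0 ≤ ⌊r * m⌋ ∧ ⌊r * m⌋ < m := by
    rw [Int.floor_nonneg, Int.floor_lt, Int.cast_natCast, mul_nonneg_iff_of_pos_right hm,
      mul_lt_iff_lt_one_left hm]
  ext p
  simp only [Set.mem_iUnion, mem_jitterCube_iff, mem_anchoredBox_iff, Pi.one_apply, hrange]
  constructor
  · rintro ⟨x, hx⟩ i
    simp [hx i]
  · intro hp
    exact ⟨fun i => ⟨⌊p i * m⌋.toNat, by have := hp i; omega⟩,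
      fun i => (Int.toNat_of_nonneg (hp i).1).symm⟩

theorem sum_cubeMeasure :
    ∑ x, cubeMeasure m d x = (m : ENNReal) ^ d • volume.restrict (anchoredBox d 1) := by
  simp_rw [cubeMeasure]
  rw [← Finset.smul_sum, ← Measure.sum_fintype, ← iUnion_jitterCube (m := m),
    Measure.restrict_iUnion pairwise_disjoint_jitterCube measurableSet_jitterCube]

theorem sum_cubeMeasure_real (hA1 : A ⊆ anchoredBox d 1) :
    ∑ x, (cubeMeasure m d x).real A = m ^ d * volume.real A := by
  simp_rw [measureReal_def]
  rw [← ENNReal.toReal_sum fun x _ => measure_ne_top _ _, ← Measure.finsetSum_apply,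
    sum_cubeMeasure, Measure.smul_apply, Measure.restrict_eq_self _ hA1]
  simp

theorem jdisc_eq_sum_centeredIndicator (hA1 : A ⊆ anchoredBox d 1) :
    (fun P => jdisc m d P A) =
      ∑ x, fun P => centeredIndicator (cubeMeasure m d x) A (P x) := by
  ext P
  simp only [centeredIndicator, jdisc_eq_sum_indicator, Finset.sum_apply, Finset.sum_sub_distrib,
    sum_cubeMeasure_real hA1]

theorem variance_jdisc (hA : MeasurableSet A) (hA1 : A ⊆ anchoredBox d 1) :
    Var[fun P => jdisc m d P A; jitterMeasure m d] =
      ∑ x, (cubeMeasure m d x).real A * (1 - (cubeMeasure m d x).real A) := by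
  rw [jdisc_eq_sum_centeredIndicator hA1, jitterMeasure_eq_pi, variance_sum_pi]
  · simp_rw [variance_centeredIndicator hA]
  · exact fun x => (memLp_indicator_one hA).sub (memLp_const _)

theorem variance_jdisc_le (hA : MeasurableSet A) (hA1 : A ⊆ anchoredBox d 1)
    (h : ∀ x, jitterCube m d x ⊆ A ∨ Disjoint (jitterCube m d x) B) :
    Var[fun P => jdisc m d P A; jitterMeasure m d] ≤ m ^ d * volume.real (A \ B) := by
  rw [variance_jdisc hA hA1, ← sum_cubeMeasure_real (Set.sdiff_subset.trans hA1)]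
  refine Finset.sum_le_sum fun x _ => ?_
  have hae : ∀ᵐ p ∂cubeMeasure m d x, p ∈ jitterCube m d x :=
    Measure.ae_smul_measure (ae_restrict_mem (measurableSet_jitterCube x)) _
  have hA0 : 0 ≤ (cubeMeasure m d x).real A := measureReal_nonneg
  rcases h x with hxA | hxB
  · have hfull : (cubeMeasure m d x).real A = 1 := by
      rw [← probReal_univ (μ := cubeMeasure m d x)]
      exact measureReal_congr (Filter.eventuallyEq_univ.2 (hae.mono hxA))
    rw [hfull, sub_self, mul_zero]
    exact measureReal_nonneg
  · have hdiff : (cubeMeasure m d x).real (A \ B) = (cubeMeasure m d x).real A :=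
      measureReal_congr <| hae.mono fun p hp =>
        propext (and_iff_left (Set.disjoint_left.1 hxB hp))
    rw [hdiff]
    nlinarith

theorem variance_jdisc_le_volume (hA : MeasurableSet A) (hA1 : A ⊆ anchoredBox d 1) :
    Var[fun P => jdisc m d P A; jitterMeasure m d] ≤ m ^ d * volume.real A := by
  simpa using variance_jdisc_le hA hA1 fun _ => .inr (Set.disjoint_empty _)

theorem measure_abs_jdisc_ge_le (hA : MeasurableSet A) (hA1 : A ⊆ anchoredBox d 1)
    {R t v : ℝ} (hR : 0 ≤ R) (hv : Var[fun P => jdisc m d P A; jitterMeasure m d] ≤ v)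
    (ht : 2 * √(v * R) + 2 * R ≤ t) :
    (jitterMeasure m d).real {P | t ≤ |jdisc m d P A|} ≤ 2 * exp (-R) := by
  have hmeas (x : Fin d → Fin m) : Measurable (centeredIndicator (cubeMeasure m d x) A) :=
    measurable_centeredIndicator hA
  have hind : iIndepFun (fun x P => centeredIndicator (cubeMeasure m d x) A (P x))
      (jitterMeasure m d) :=
    iIndepFun_pi (μ := cubeMeasure m d) fun x => (hmeas x).aemeasurable
  have hmean (x : Fin d → Fin m) :
      ∫ P, centeredIndicator (cubeMeasure m d x) A (P x) ∂jitterMeasure m d = 0 :=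
    (integral_comp_eval (μ := cubeMeasure m d) (hmeas x).aestronglyMeasurable).trans
      (integral_centeredIndicator hA)
  rw [jdisc_eq_sum_centeredIndicator hA1] at hv
  have htail := measure_abs_sum_ge_le_of_iIndepFun hind
    (fun x => (hmeas x).comp (measurable_pi_apply x))
    (fun x => .of_forall fun P => abs_centeredIndicator_le_one _) hmean Finset.univ hR hv ht
  rwa [← jdisc_eq_sum_centeredIndicator hA1] at htail

end JitteredSampling

section BoxVariance

variable {m d : ℕ} [NeZero m] {y z : Fin d → ℝ}

theorem prod_sub_prod_le_sum_sub {ι : Type*} {s : Finset ι} {f g : ι → ℝ}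
    (hf : ∀ i ∈ s, 0 ≤ f i) (hfg : ∀ i ∈ s, f i ≤ g i) (hg : ∀ i ∈ s, g i ≤ 1) :
    ∏ i ∈ s, g i - ∏ i ∈ s, f i ≤ ∑ i ∈ s, (g i - f i) := by
  induction s using Finset.cons_induction with
  | empty => simp
  | cons a s ha ih =>
    simp only [Finset.forall_mem_cons] at hf hfg hg
    rw [Finset.prod_cons, Finset.prod_cons, Finset.sum_cons]
    have hg1 : ∏ i ∈ s, g i ≤ 1 :=
      Finset.prod_le_one (fun i hi => (hf.2 i hi).trans (hfg.2 i hi)) hg.2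
    have hprod : 0 ≤ ∏ i ∈ s, g i - ∏ i ∈ s, f i :=
      sub_nonneg.2 (Finset.prod_le_prod hf.2 hfg.2)
    calc g a * ∏ i ∈ s, g i - f a * ∏ i ∈ s, f i
        = (g a - f a) * ∏ i ∈ s, g i + f a * (∏ i ∈ s, g i - ∏ i ∈ s, f i) := by ring
      _ ≤ (g a - f a) * 1 + 1 * (∏ i ∈ s, g i - ∏ i ∈ s, f i) := by
          gcongr
          · exact sub_nonneg.2 hfg.1
          · exact hfg.1.trans hg.1
      _ ≤ g a - f a + ∑ i ∈ s, (g i - f i) := by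
          grw [mul_one, one_mul, ih hf.2 hfg.2 hg.2]

theorem volumeReal_anchoredBox_sdiff (hz : 0 ≤ z) (hzy : z ≤ y) :
    volume.real (anchoredBox d y \ anchoredBox d z) = ∏ i, y i - ∏ i, z i := by
  rw [measureReal_sdiff (anchoredBox_mono hzy) (measurableSet_anchoredBox z)
    (volume_anchoredBox_ne_top y), volumeReal_anchoredBox hz,
    volumeReal_anchoredBox (hz.trans hzy)]

theorem jitterCube_subset_or_disjoint (y : Fin d → ℝ) (x : Fin d → Fin m) :
    jitterCube m d x ⊆ anchoredBox d y ∨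
      Disjoint (jitterCube m d x) (anchoredBox d fun i => ⌊y i * m⌋ / m) := by
  have hm : (0 : ℝ) < m := Nat.cast_pos.2 (NeZero.pos m)
  by_cases hx : ∀ i, ((x i : ℕ) : ℤ) < ⌊y i * m⌋
  · refine .inl fun p hp => mem_anchoredBox_iff.2 fun i => ?_
    rw [mem_jitterCube_iff] at hp
    constructor
    · have hfloor : 0 ≤ ⌊p i * m⌋ := by simp [hp i]
      exact nonneg_of_mul_nonneg_left (Int.floor_nonneg.1 hfloor) hm
    · have hfloor : ⌊p i * m⌋ < ⌊y i * m⌋ := hp i ▸ hx i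
      exact lt_of_mul_lt_mul_right ((Int.floor_lt.1 hfloor).trans_le (Int.floor_le _)) hm.le
  · refine .inr (Set.disjoint_left.2 fun p hp hpz => hx fun i => ?_)
    rw [mem_jitterCube_iff] at hp
    rw [← hp i, Int.floor_lt, ← lt_div_iff₀ hm]
    exact (mem_anchoredBox_iff.1 hpz i).2

/- A cube inside the box contributes no variance, so only the boundary cubes count; they lie in
the shell between the box and its rounding down to the grid. -/
theorem variance_jdisc_anchoredBox_le (hy0 : 0 ≤ y) (hy1 : y ≤ 1) :
    Var[fun P => jdisc m d P (anchoredBox d y); jitterMeasure m d] ≤ m ^ d * (d / m) := by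
  have hm : (0 : ℝ) < m := Nat.cast_pos.2 (NeZero.pos m)
  set z : Fin d → ℝ := fun i => ⌊y i * m⌋ / m
  have hz0 : 0 ≤ z := fun i =>
    div_nonneg (Int.cast_nonneg (Int.floor_nonneg.2 (mul_nonneg (hy0 i) hm.le))) hm.le
  have hzy : z ≤ y := fun i => (div_le_iff₀ hm).2 (Int.floor_le _)
  have hyz (i : Fin d) : y i - z i ≤ 1 / m := by
    rw [sub_le_iff_le_add, ← add_div, le_div_iff₀ hm, add_comm]
    exact (Int.lt_floor_add_one _).le
  grw [variance_jdisc_le (measurableSet_anchoredBox y) (anchoredBox_mono hy1)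
    (jitterCube_subset_or_disjoint y), volumeReal_anchoredBox_sdiff hz0 hzy,
    prod_sub_prod_le_sum_sub (fun i _ => hz0 i) (fun i _ => hzy i) fun i _ => hy1 i,
    Finset.sum_le_card_nsmul _ _ _ fun i _ => hyz i]
  simp [div_eq_mul_inv]

end BoxVariance

section Discrepancy

variable {m d : ℕ} {P : (Fin d → Fin m) → Fin d → ℝ} {A B Y : Set (Fin d → ℝ)}

theorem jdisc_empty : jdisc m d P ∅ = 0 := by
  simp [jdisc]

theorem neg_volume_le_jdisc : -(m ^ d * volume.real A) ≤ jdisc m d P A :=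
  neg_le_sub_iff_le_add.2 (le_add_of_nonneg_left (Nat.cast_nonneg _))

theorem jdisc_sdiff (hB : MeasurableSet B) (hBA : B ⊆ A) (hA : volume A ≠ ⊤) :
    jdisc m d P (A \ B) = jdisc m d P A - jdisc m d P B := by
  simp only [jdisc_eq_sum_indicator, measureReal_sdiff hBA hB hA, Set.indicator_sdiff hBA,
    Pi.sub_apply, Finset.sum_sub_distrib]
  ring

theorem jdisc_le_add (hA : MeasurableSet A) (hAB : A ⊆ B) (hB : volume B ≠ ⊤) :
    jdisc m d P A ≤ jdisc m d P B + m ^ d * (volume.real B - volume.real A) := by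
  have hlower := neg_volume_le_jdisc (P := P) (A := B \ A)
  rw [jdisc_sdiff hA hAB hB, measureReal_sdiff hAB hA hB] at hlower
  linarith

theorem abs_jdisc_le_of_subset_of_subset (hA : MeasurableSet A) (hY : MeasurableSet Y)
    (hAY : A ⊆ Y) (hYB : Y ⊆ B) (hB : volume B ≠ ⊤) {T : ℝ} (hTA : |jdisc m d P A| ≤ T)
    (hTB : |jdisc m d P B| ≤ T) :
    |jdisc m d P Y| ≤ T + m ^ d * (volume.real B - volume.real A) := by
  have hYtop : volume Y ≠ ⊤ := measure_ne_top_of_subset hYB hB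
  have hlower := jdisc_le_add (P := P) hA hAY hYtop
  have hupper := jdisc_le_add (P := P) hY hYB hB
  have hAY' : volume.real A ≤ volume.real Y := measureReal_mono hAY hYtop
  have hYB' : volume.real Y ≤ volume.real B := measureReal_mono hYB hB
  have hlower' : (m : ℝ) ^ d * (volume.real Y - volume.real A) ≤
      m ^ d * (volume.real B - volume.real A) := by gcongr
  have hupper' : (m : ℝ) ^ d * (volume.real B - volume.real Y) ≤
      m ^ d * (volume.real B - volume.real A) := by gcongr
  rw [abs_le] at *
  constructor <;> linarith

end Discrepancy

section LogGrid

variable {d : ℕ} {q : ℝ} {n : Fin d → ℕ}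

/-- The lattice points `n ∈ ℕ^ι` of the simplex `∑ n_i ≤ S`. -/
def latticeSimplex (ι : Type*) [Fintype ι] [DecidableEq ι] (S : ℕ) : Finset (ι → ℕ) :=
  {n ∈ Fintype.piFinset fun _ : ι => Finset.range (S + 1) | ∑ i, n i ≤ S}

theorem mem_latticeSimplex_iff {ι : Type*} [Fintype ι] [DecidableEq ι] {S : ℕ} {n : ι → ℕ} :
    n ∈ latticeSimplex ι S ↔ ∑ i, n i ≤ S := by
  simp only [latticeSimplex, Finset.mem_filter, Fintype.mem_piFinset, Finset.mem_range,
    and_iff_right_iff_imp]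
  exact fun h i => Nat.lt_succ_of_le ((Finset.single_le_sum_of_canonicallyOrdered
    (Finset.mem_univ i)).trans h)

/- A slack coordinate turns `∑ n_i ≤ S` into `∑ n_i = S` over `Option ι`. -/
theorem card_latticeSimplex_le_choose (ι : Type*) [Fintype ι] [DecidableEq ι] (S : ℕ) :
    (latticeSimplex ι S).card ≤ (Fintype.card ι + S).choose S := by
  have hsub : latticeSimplex ι S ⊆
      ((Finset.univ : Finset (Option ι)).finsuppAntidiag S).image fun f i => f (some i) := by
    intro n hn
    rw [mem_latticeSimplex_iff] at hn
    refine Finset.mem_image.2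
      ⟨Finsupp.equivFunOnFinite.symm fun o => o.elim (S - ∑ i, n i) n, ?_, rfl⟩
    simp [Finset.mem_finsuppAntidiag, Fintype.sum_option, hn]
  refine (Finset.card_le_card hsub).trans (Finset.card_image_le.trans_eq ?_)
  rw [Finset.card_finsuppAntidiag_nat_eq_choose, Finset.card_univ, Fintype.card_option,
    Nat.add_right_comm, Nat.add_sub_cancel]

theorem card_latticeSimplex_le_pow (ι : Type*) [Fintype ι] [DecidableEq ι] [Nonempty ι] (S : ℕ) :
    ((latticeSimplex ι S).card : ℝ) ≤
      (exp 1 * (S / Fintype.card ι + 1)) ^ Fintype.card ι := by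
  set k := Fintype.card ι
  have hk : (0 : ℝ) < k := Nat.cast_pos.2 Fintype.card_pos
  calc ((latticeSimplex ι S).card : ℝ) ≤ ((k + S).choose k : ℕ) := by
        rw [Nat.choose_symm_add]
        exact_mod_cast card_latticeSimplex_le_choose ι S
    _ ≤ ((k + S : ℕ) : ℝ) ^ k / k.factorial := Nat.choose_le_pow_div _ _
    _ = (S / k + 1) ^ k * ((k : ℝ) ^ k / k.factorial) := by
        rw [← mul_div_assoc, ← mul_pow, add_mul, div_mul_cancel₀ _ hk.ne']
        push_cast
        ring
    _ ≤ (S / k + 1) ^ k * exp k := by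
        grw [pow_div_factorial_le_exp (k : ℝ) hk.le k]
    _ = (exp 1 * (S / k + 1)) ^ k := by
        rw [mul_pow, ← exp_nat_mul, mul_one, mul_comm]

/-- The point of the logarithmic grid of resolution `q` with index `n`: moving one step in one
coordinate changes the volume of the anchored box by a factor `exp (-1 / (d * q))`. -/
def gridPoint (d : ℕ) (q : ℝ) (n : Fin d → ℕ) : Fin d → ℝ :=
  fun i => exp (-(n i / (d * q)))

/-- The indices of the grid points of resolution `q` that are kept: the others span boxes of volume
less than `1 / q`. -/
def gridIndices (d : ℕ) (q : ℝ) : Finset (Fin d → ℕ) :=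
  latticeSimplex (Fin d) ⌊d * (q * log q + 1)⌋₊

/-- The anchored box spanned by a grid point, replaced by `∅` when the index is not kept. -/
def gridBox (d : ℕ) (q : ℝ) (n : Fin d → ℕ) : Set (Fin d → ℝ) :=
  if n ∈ gridIndices d q then anchoredBox d (gridPoint d q n) else ∅

/-- The index at resolution `q` of the grid point just below the grid point with index `n` at
resolution `2 * q`. -/
def gridParent (n : Fin d → ℕ) : Fin d → ℕ :=
  fun i => (n i + 1) / 2

theorem gridPoint_nonneg (d : ℕ) (q : ℝ) (n : Fin d → ℕ) : 0 ≤ gridPoint d q n :=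
  fun _ => (exp_pos _).le

theorem gridPoint_le_one (hq : 0 ≤ q) (n : Fin d → ℕ) : gridPoint d q n ≤ 1 :=
  fun _ => exp_le_one_iff.2 (neg_nonpos.2 (by positivity))

theorem prod_gridPoint (d : ℕ) (q : ℝ) (n : Fin d → ℕ) :
    ∏ i, gridPoint d q n i = exp (-((∑ i, n i : ℕ) / (d * q))) := by
  rw [Nat.cast_sum, Finset.sum_div, ← Finset.sum_neg_distrib, exp_sum]
  rfl

theorem mem_gridIndices_iff (hq : 1 ≤ q) :
    n ∈ gridIndices d q ↔ ((∑ i, n i : ℕ) : ℝ) ≤ d * (q * log q + 1) := by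
  have := log_nonneg hq
  rw [gridIndices, mem_latticeSimplex_iff, Nat.le_floor_iff (by positivity)]

theorem gridBox_of_mem (hn : n ∈ gridIndices d q) :
    gridBox d q n = anchoredBox d (gridPoint d q n) :=
  if_pos hn

theorem gridBox_of_notMem (hn : n ∉ gridIndices d q) : gridBox d q n = ∅ :=
  if_neg hn

theorem volumeReal_gridBox_of_mem (hn : n ∈ gridIndices d q) :
    volume.real (gridBox d q n) = exp (-((∑ i, n i : ℕ) / (d * q))) := by
  rw [gridBox_of_mem hn, volumeReal_anchoredBox (gridPoint_nonneg d q n), prod_gridPoint]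

theorem gridBox_subset_unitBox (hq : 0 ≤ q) (n : Fin d → ℕ) :
    gridBox d q n ⊆ anchoredBox d 1 := by
  rw [gridBox]
  split_ifs
  exacts [anchoredBox_mono (gridPoint_le_one hq n), Set.empty_subset _]

theorem measurableSet_gridBox (d : ℕ) (q : ℝ) (n : Fin d → ℕ) : MeasurableSet (gridBox d q n) := by
  rw [gridBox]
  split_ifs
  exacts [measurableSet_anchoredBox _, .empty]

theorem volume_gridBox_ne_top (hq : 0 ≤ q) (n : Fin d → ℕ) : volume (gridBox d q n) ≠ ⊤ :=
  measure_ne_top_of_subset (gridBox_subset_unitBox hq n) (volume_anchoredBox_ne_top 1)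

theorem exp_neg_sub_exp_neg_le {a b c : ℝ} (ha : 0 ≤ a) (hc : 0 ≤ c) (hb : b ≤ a + c) :
    exp (-a) - exp (-b) ≤ c := by
  calc exp (-a) - exp (-b) ≤ exp (-a) - exp (-(a + c)) := by gcongr
    _ = exp (-a) * (1 - exp (-c)) := by rw [neg_add, exp_add]; ring
    _ ≤ 1 * (1 - exp (-c)) := by
        gcongr
        · exact sub_nonneg.2 (exp_le_one_iff.2 (neg_nonpos.2 hc))
        · exact exp_le_one_iff.2 (neg_nonpos.2 ha)
    _ ≤ c := by linarith [one_sub_le_exp_neg c]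

theorem gridPoint_gridParent_le (hq : 0 ≤ q) (n : Fin d → ℕ) :
    gridPoint d q (gridParent n) ≤ gridPoint d (2 * q) n := by
  intro i
  have hi : (n i : ℝ) / 2 ≤ (gridParent n i : ℕ) := by
    rw [div_le_iff₀ two_pos]
    exact_mod_cast (by unfold gridParent; omega : n i ≤ gridParent n i * 2)
  refine exp_le_exp.2 (neg_le_neg ?_)
  rw [mul_left_comm, ← div_div]
  gcongr

theorem two_mul_sum_gridParent_le (n : Fin d → ℕ) :
    2 * ∑ i, gridParent n i ≤ ∑ i, n i + d := by
  calc 2 * ∑ i, gridParent n i ≤ ∑ i, (n i + 1) := by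
        rw [Finset.mul_sum]
        exact Finset.sum_le_sum fun i _ => Nat.mul_div_le _ _
    _ = ∑ i, n i + d := by simp [Finset.sum_add_distrib]

theorem gridBox_gridParent_subset (hq : 0 ≤ q) (hn : n ∈ gridIndices d (2 * q)) :
    gridBox d q (gridParent n) ⊆ gridBox d (2 * q) n := by
  rw [gridBox_of_mem hn, gridBox]
  split_ifs
  exacts [anchoredBox_mono (gridPoint_gridParent_le hq n), Set.empty_subset _]

theorem volumeReal_gridBox_sdiff_gridParent_le [NeZero d] (hq : 1 ≤ q)
    (hn : n ∈ gridIndices d (2 * q)) :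
    volume.real (gridBox d (2 * q) n \ gridBox d q (gridParent n)) ≤ 1 / q := by
  have hd : (0 : ℝ) < d := Nat.cast_pos.2 (NeZero.pos d)
  have hq0 : 0 < q := zero_lt_one.trans_le hq
  have hsum : 2 * ((∑ i, gridParent n i : ℕ) : ℝ) ≤ (∑ i, n i : ℕ) + d :=
    mod_cast two_mul_sum_gridParent_le n
  rw [measureReal_sdiff (gridBox_gridParent_subset hq0.le hn) (measurableSet_gridBox d q _)
    (volume_gridBox_ne_top (by positivity) n), volumeReal_gridBox_of_mem hn]
  by_cases hp : gridParent n ∈ gridIndices d q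
  · rw [volumeReal_gridBox_of_mem hp]
    refine exp_neg_sub_exp_neg_le (by positivity) (by positivity) ?_
    rw [div_add_div _ _ (by positivity) hq0.ne', div_le_div_iff₀ (by positivity) (by positivity)]
    have : 0 ≤ d * q ^ 2 * d := by positivity
    nlinarith [mul_le_mul_of_nonneg_left hsum (by positivity : 0 ≤ d * q ^ 2)]
  · rw [mem_gridIndices_iff hq, not_le] at hp
    rw [gridBox_of_notMem (mt (mem_gridIndices_iff hq).1 hp.not_ge), measureReal_empty, sub_zero,
      one_div, ← exp_log (inv_pos.2 hq0), log_inv, exp_le_exp, neg_le_neg_iff,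
      le_div_iff₀ (by positivity)]
    linarith

end LogGrid

section Bracketing

theorem exists_le_prod_eq {ι : Type*} [Fintype ι] {y : ι → ℝ} {c : ℝ} (hy0 : 0 ≤ y) (hy1 : y ≤ 1)
    (hyc : ∏ i, y i ≤ c) (hc : c ≤ 1) : ∃ z, y ≤ z ∧ z ≤ 1 ∧ ∏ i, z i = c := by
  have hcont : ContinuousOn (fun s : ℝ => ∏ i, max (y i) s) (Set.Icc 0 1) := by fun_prop
  have h0 : ∏ i, max (y i) 0 = ∏ i, y i := Finset.prod_congr rfl fun i _ => max_eq_left (hy0 i)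
  have h1 : ∏ i, max (y i) 1 = 1 := Finset.prod_eq_one fun i _ => max_eq_right (hy1 i)
  obtain ⟨s, ⟨-, hs1⟩, hs⟩ :=
    intermediate_value_Icc zero_le_one hcont ⟨h0.trans_le hyc, hc.trans_eq h1.symm⟩
  exact ⟨fun i => max (y i) s, fun i => le_max_left _ _, fun i => max_le (hy1 i) hs1, hs⟩

variable {d : ℕ} [NeZero d] {q : ℝ} {y : Fin d → ℝ}

theorem exists_gridBox_bracket_of_le_prod (hq : 1 ≤ q) (hy1 : y ≤ 1) (hy : 1 / q ≤ ∏ i, y i)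
    (hy0 : ∀ i, 0 < y i) :
    ∃ a b, gridBox d q a ⊆ anchoredBox d y ∧ anchoredBox d y ⊆ gridBox d q b ∧
      volume.real (gridBox d q b) ≤ volume.real (gridBox d q a) + 1 / q := by
  have hd : (0 : ℝ) < d := Nat.cast_pos.2 (NeZero.pos d)
  have hq0 : 0 < q := zero_lt_one.trans_le hq
  have hdq : 0 < d * q := mul_pos hd hq0
  have hlog0 (i : Fin d) : 0 ≤ -log (y i) := neg_nonneg.2 (log_nonpos (hy0 i).le (hy1 i))
  have hsumlog : ∑ i, -log (y i) ≤ log q := by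
    rw [Finset.sum_neg_distrib, ← log_prod fun i _ => (hy0 i).ne', neg_le, ← log_inv, ← one_div]
    exact log_le_log (by positivity) hy
  set n : Fin d → ℕ := fun i => ⌊-log (y i) * (d * q)⌋₊
  have hle (i : Fin d) : (n i : ℝ) ≤ -log (y i) * (d * q) :=
    Nat.floor_le (mul_nonneg (hlog0 i) hdq.le)
  have hlt (i : Fin d) : -log (y i) * (d * q) < n i + 1 := Nat.lt_floor_add_one _
  have hsum : ((∑ i, n i : ℕ) : ℝ) ≤ d * (q * log q) := by
    calc ((∑ i, n i : ℕ) : ℝ) ≤ ∑ i, -log (y i) * (d * q) := by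
          push_cast
          exact Finset.sum_le_sum fun i _ => hle i
      _ ≤ log q * (d * q) := by rw [← Finset.sum_mul]; gcongr
      _ = d * (q * log q) := by ring
  have hsucc : ∑ i, (n + 1) i = ∑ i, n i + d := by simp [Finset.sum_add_distrib]
  have hn : n ∈ gridIndices d q := (mem_gridIndices_iff hq).2 (by linarith)
  have hn1 : n + 1 ∈ gridIndices d q := by
    rw [mem_gridIndices_iff hq, hsucc]
    push_cast at hsum ⊢
    linarith
  refine ⟨n + 1, n, ?_, ?_, ?_⟩
  · rw [gridBox_of_mem hn1]
    refine anchoredBox_mono fun i => (le_log_iff_exp_le (hy0 i)).1 ?_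
    rw [neg_le, le_div_iff₀ hdq]
    simpa using (hlt i).le
  · rw [gridBox_of_mem hn]
    refine anchoredBox_mono fun i => (log_le_iff_le_exp (hy0 i)).1 ?_
    rw [le_neg, div_le_iff₀ hdq]
    exact hle i
  · rw [volumeReal_gridBox_of_mem hn, volumeReal_gridBox_of_mem hn1, ← sub_le_iff_le_add', hsucc]
    refine exp_neg_sub_exp_neg_le (by positivity) (by positivity) (le_of_eq ?_)
    push_cast
    field_simp

/- A box of volume below `1 / q` need not contain any kept grid box; it is enlarged to volume
exactly `1 / q` for the upper bracket, and the lower bracket is empty. -/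
theorem exists_gridBox_bracket (hq : 1 ≤ q) (hy0 : 0 ≤ y) (hy1 : y ≤ 1) :
    ∃ a b, gridBox d q a ⊆ anchoredBox d y ∧ anchoredBox d y ⊆ gridBox d q b ∧
      volume.real (gridBox d q b) ≤ volume.real (gridBox d q a) + 2 / q := by
  have hq0 : 0 < q := zero_lt_one.trans_le hq
  have pos_of_prod {z : Fin d → ℝ} (hz0 : 0 ≤ z) (hz : 1 / q ≤ ∏ i, z i) (i : Fin d) : 0 < z i :=
    (hz0 i).lt_of_ne' fun h => (one_div_pos.2 hq0).not_ge <|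
      hz.trans_eq (Finset.prod_eq_zero (Finset.mem_univ i) h)
  rcases le_total (1 / q) (∏ i, y i) with hy | hy
  · obtain ⟨a, b, ha, hb, hab⟩ :=
      exists_gridBox_bracket_of_le_prod hq hy1 hy (pos_of_prod hy0 hy)
    exact ⟨a, b, ha, hb, hab.trans (by gcongr; exact one_le_two)⟩
  · obtain ⟨z, hyz, hz1, hz⟩ := exists_le_prod_eq hy0 hy1 hy ((div_le_one hq0).2 hq)
    have hz0 : 0 ≤ z := hy0.trans hyz
    obtain ⟨a, b, ha, hb, hab⟩ :=
      exists_gridBox_bracket_of_le_prod hq hz1 hz.ge (pos_of_prod hz0 hz.ge)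
    obtain ⟨a', ha'⟩ := Infinite.exists_notMem_finset (gridIndices d q)
    refine ⟨a', b, ?_, (anchoredBox_mono hyz).trans hb, ?_⟩
    · rw [gridBox_of_notMem ha']
      exact Set.empty_subset _
    · have hvol : volume.real (gridBox d q a) ≤ 1 / q := by
        rw [← hz, ← volumeReal_anchoredBox hz0]
        exact measureReal_mono ha (volume_anchoredBox_ne_top z)
      rw [gridBox_of_notMem ha', measureReal_empty, zero_add]
      linarith [add_div 1 1 q, one_add_one_eq_two (R := ℝ)]

end Bracketing

section Chaining

variable {m d : ℕ} {q : ℝ} {n : Fin d → ℕ}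

/-- The increments of the chain of grid boxes at the resolutions `2 ^ k * q`: the box of a grid
point minus the box of its parent. -/
def chainLink (d : ℕ) (q : ℝ) : ℕ → (Fin d → ℕ) → Set (Fin d → ℝ)
  | 0, n => gridBox d q n
  | k + 1, n => gridBox d (2 ^ (k + 1) * q) n \ gridBox d (2 ^ k * q) (gridParent n)

theorem measurableSet_chainLink (d : ℕ) (q : ℝ) (k : ℕ) (n : Fin d → ℕ) :
    MeasurableSet (chainLink d q k n) := by
  cases k
  exacts [measurableSet_gridBox _ _ _,
    (measurableSet_gridBox _ _ _).diff (measurableSet_gridBox _ _ _)]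

theorem chainLink_subset_unitBox (hq : 0 ≤ q) (k : ℕ) (n : Fin d → ℕ) :
    chainLink d q k n ⊆ anchoredBox d 1 := by
  cases k
  exacts [gridBox_subset_unitBox hq n,
    Set.sdiff_subset.trans (gridBox_subset_unitBox (by positivity) n)]

theorem jdisc_gridBox_succ (hq : 0 ≤ q) (P : (Fin d → Fin m) → Fin d → ℝ) (k : ℕ)
    (hn : n ∈ gridIndices d (2 ^ (k + 1) * q)) :
    jdisc m d P (gridBox d (2 ^ (k + 1) * q) n) =
      jdisc m d P (chainLink d q (k + 1) n) +
        jdisc m d P (gridBox d (2 ^ k * q) (gridParent n)) := by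
  have hsub : gridBox d (2 ^ k * q) (gridParent n) ⊆ gridBox d (2 ^ (k + 1) * q) n := by
    rw [pow_succ', mul_assoc] at hn ⊢
    exact gridBox_gridParent_subset (by positivity) hn
  rw [chainLink, jdisc_sdiff (measurableSet_gridBox _ _ _) hsub
    (volume_gridBox_ne_top (by positivity) n), sub_add_cancel]

theorem abs_jdisc_gridBox_le (hq : 0 ≤ q) {P : (Fin d → Fin m) → Fin d → ℝ} {t : ℕ → ℝ}
    (ht : ∀ k, 0 ≤ t k) {K : ℕ}
    (hlink : ∀ k ≤ K, ∀ n ∈ gridIndices d (2 ^ k * q), |jdisc m d P (chainLink d q k n)| ≤ t k)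
    (n : Fin d → ℕ) :
    |jdisc m d P (gridBox d (2 ^ K * q) n)| ≤ ∑ k ∈ Finset.range (K + 1), t k := by
  by_cases hn : n ∈ gridIndices d (2 ^ K * q)
  · cases K with
    | zero => simpa [chainLink] using hlink 0 le_rfl n (by simpa using hn)
    | succ K =>
      rw [jdisc_gridBox_succ hq P K hn, Finset.sum_range_succ, add_comm (∑ k ∈ _, _)]
      grw [abs_add_le, hlink (K + 1) le_rfl n hn, abs_jdisc_gridBox_le hq ht
        (fun k hk => hlink k (hk.trans (Nat.le_succ K))) (gridParent n)]
  · rw [gridBox_of_notMem hn, jdisc_empty, abs_zero]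
    exact Finset.sum_nonneg fun k _ => ht k

theorem one_le_two_pow_mul_div [NeZero d] (hdm : d ≤ m) (k : ℕ) :
    1 ≤ 2 ^ k * ((m : ℝ) / d) :=
  one_le_mul_of_one_le_of_one_le (one_le_pow₀ one_le_two)
    ((one_le_div (Nat.cast_pos.2 (NeZero.pos d))).2 (Nat.cast_le.2 hdm))

theorem variance_jdisc_chainLink_le [NeZero d] (hdm : d ≤ m) (k : ℕ)
    (hn : n ∈ gridIndices d (2 ^ k * (m / d))) :
    Var[fun P => jdisc m d P (chainLink d (m / d) k n); jitterMeasure m d] ≤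
      2 * m ^ d / (2 ^ k * (m / d)) := by
  have hd : 0 < d := NeZero.pos d
  have : NeZero m := ⟨(hd.trans_le hdm).ne'⟩
  have hm' : (0 : ℝ) < m := Nat.cast_pos.2 (hd.trans_le hdm)
  cases k with
  | zero =>
    rw [pow_zero, one_mul] at hn
    rw [chainLink, gridBox_of_mem hn]
    refine (variance_jdisc_anchoredBox_le (gridPoint_nonneg _ _ _)
      (gridPoint_le_one (by positivity) n)).trans ?_
    calc (m : ℝ) ^ d * (d / m) ≤ 2 * (m ^ d * (d / m)) :=
          le_mul_of_one_le_left (by positivity) one_le_two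
      _ = 2 * m ^ d / (2 ^ 0 * (m / d)) := by field_simp
  | succ k =>
    have hvol := volumeReal_gridBox_sdiff_gridParent_le (one_le_two_pow_mul_div hdm k) (n := n)
      (by rwa [← mul_assoc, ← pow_succ'])
    rw [← mul_assoc, ← pow_succ'] at hvol
    refine (variance_jdisc_le_volume (measurableSet_chainLink _ _ _ _)
      (chainLink_subset_unitBox (by positivity) _ _)).trans ?_
    calc (m : ℝ) ^ d * volume.real (chainLink d (m / d) (k + 1) n)
        ≤ m ^ d * (1 / (2 ^ k * (m / d))) := by gcongr; exact hvol
      _ = 2 * m ^ d / (2 ^ (k + 1) * (m / d)) := by field_simp; ring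

theorem starDisc_le_of_chainLink [NeZero d] (hq : 1 ≤ q) {P : (Fin d → Fin m) → Fin d → ℝ}
    {t : ℕ → ℝ} (ht : ∀ k, 0 ≤ t k) {K : ℕ}
    (hlink : ∀ k ≤ K, ∀ n ∈ gridIndices d (2 ^ k * q), |jdisc m d P (chainLink d q k n)| ≤ t k) :
    starDisc m d P ≤ ∑ k ∈ Finset.range (K + 1), t k + m ^ d * (2 / (2 ^ K * q)) := by
  have hT : 0 ≤ ∑ k ∈ Finset.range (K + 1), t k := Finset.sum_nonneg fun k _ => ht k
  have hqK : 1 ≤ 2 ^ K * q := one_le_mul_of_one_le_of_one_le (one_le_pow₀ one_le_two) hq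
  have hbox := abs_jdisc_gridBox_le (zero_le_one.trans hq) ht hlink
  refine Real.iSup_le (fun y => ?_) (by positivity)
  obtain ⟨a, b, ha, hb, hab⟩ :=
    exists_gridBox_bracket hqK (fun i => (y.2 i).1) fun i => (y.2 i).2.le
  grw [abs_jdisc_le_of_subset_of_subset (measurableSet_gridBox _ _ a)
    (measurableSet_anchoredBox _) ha hb (volume_gridBox_ne_top (by positivity) b) (hbox a) (hbox b),
    sub_le_iff_le_add'.2 hab]

end Chaining

section UnionBound

variable {m d : ℕ} {q ℓ : ℝ}

/-- The exponent `R` of the tail bound `exp (-R)` imposed on each chain link at resolution `q`;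
it is chosen so that the links of one resolution together contribute at most `1 / (400 * q)`. -/
def linkEntropy (d : ℕ) (q : ℝ) : ℝ :=
  2 * d * log (4 * exp 1 * q)

/-- The discrepancy `2 * √(v * R) + 2 * R` that Bernstein's inequality grants to a chain link at
resolution `q`, whose variance is at most `v = 2 * m ^ d / q`. -/
def linkThreshold (m d : ℕ) (q : ℝ) : ℝ :=
  2 * √(2 * m ^ d / q * linkEntropy d q) + 2 * linkEntropy d q

theorem log_four_le_linkEntropy [NeZero d] (hq : 1 ≤ q) : log 4 ≤ linkEntropy d q := by
  have hd : (1 : ℝ) ≤ d := Nat.one_le_cast.2 (NeZero.one_le)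
  have h4 : 0 ≤ log 4 := log_nonneg (by norm_num)
  have hle : log 4 ≤ log (4 * exp 1 * q) := by
    refine log_le_log four_pos ?_
    rw [mul_assoc]
    exact le_mul_of_one_le_right four_pos.le
      (one_le_mul_of_one_le_of_one_le (one_le_exp zero_le_one) hq)
  rw [linkEntropy]
  nlinarith

theorem linkEntropy_nonneg [NeZero d] (hq : 1 ≤ q) : 0 ≤ linkEntropy d q :=
  (log_nonneg (by norm_num)).trans (log_four_le_linkEntropy hq)

theorem mul_log_add_two_le (hq : 1 ≤ q) : q * log q + 2 ≤ 2 * (q * √q) := by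
  have hlog : log q ≤ 2 * (√q - 1) := by
    have := log_le_sub_one_of_pos (sqrt_pos.2 (zero_lt_one.trans_le hq))
    rw [log_sqrt (zero_le_one.trans hq)] at this
    linarith
  nlinarith

theorem exp_neg_linkEntropy (d : ℕ) (hq : 0 < q) :
    exp (-linkEntropy d q) = (1 / (4 * exp 1 * q) ^ 2) ^ d := by
  have hlog : linkEntropy d q = log (((4 * exp 1 * q) ^ 2) ^ d) := by
    rw [log_pow, log_pow, linkEntropy]
    push_cast
    ring
  rw [hlog, exp_neg, exp_log (by positivity), one_div, inv_pow]

theorem card_gridIndices_mul_exp_neg_linkEntropy_le (hd : 2 ≤ d) (hq : 1 ≤ q) :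
    (gridIndices d q).card * exp (-linkEntropy d q) ≤ 1 / (400 * q) := by
  have : NeZero d := ⟨by omega⟩
  have hd0 : (0 : ℝ) < d := Nat.cast_pos.2 (NeZero.pos d)
  have hq0 : 0 < q := zero_lt_one.trans_le hq
  have hsqrt : 1 ≤ √q := one_le_sqrt.2 hq
  have he : (2.7 : ℝ) ≤ exp 1 := by linarith [exp_one_gt_d9]
  have hlog := log_nonneg hq
  have hsize : (⌊d * (q * log q + 1)⌋₊ : ℝ) / d + 1 ≤ 2 * (q * √q) := by
    grw [Nat.floor_le (by positivity), ← mul_log_add_two_le hq, mul_div_cancel_left₀ _ hd0.ne']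
    linarith
  have hcard : ((gridIndices d q).card : ℝ) ≤ (exp 1 * (2 * (q * √q))) ^ d := by
    have h := card_latticeSimplex_le_pow (Fin d) ⌊d * (q * log q + 1)⌋₊
    rw [Fintype.card_fin] at h
    grw [gridIndices, h, hsize]
  calc (gridIndices d q).card * exp (-linkEntropy d q)
      ≤ (exp 1 * (2 * (q * √q))) ^ d * (1 / (4 * exp 1 * q) ^ 2) ^ d := by
        rw [exp_neg_linkEntropy d hq0]
        gcongr
    _ = (1 / (8 * exp 1 * √q)) ^ d := by
        rw [← mul_pow]
        congr 1
        field_simp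
        rw [sq_sqrt hq0.le]
        ring
    _ ≤ (1 / (8 * exp 1 * √q)) ^ 2 :=
        pow_le_pow_of_le_one (by positivity) ((div_le_one (by positivity)).2 (by nlinarith)) hd
    _ = 1 / (64 * exp 1 ^ 2 * q) := by
        rw [div_pow, mul_pow, sq_sqrt hq0.le]
        ring
    _ ≤ 1 / (400 * q) := by
        gcongr
        nlinarith

theorem exp_neg_mul_le_rpow_mul_exp_neg {R : ℝ} (hR : log 4 ≤ R) (hℓ : 1 ≤ ℓ) :
    exp (-(ℓ * R)) ≤ 4 * 4 ^ (-ℓ) * exp (-R) := by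
  have h4 : (4 : ℝ) * 4 ^ (-ℓ) = exp ((1 - ℓ) * log 4) := by
    rw [mul_comm (1 - ℓ), ← rpow_def_of_pos four_pos, sub_eq_add_neg, rpow_add four_pos, rpow_one]
  rw [h4, ← exp_add, exp_le_exp]
  nlinarith

theorem measure_abs_jdisc_chainLink_ge_le [NeZero d] (hdm : d ≤ m) (hℓ : 1 ≤ ℓ) (k : ℕ)
    {n : Fin d → ℕ} (hn : n ∈ gridIndices d (2 ^ k * (m / d))) :
    (jitterMeasure m d).real {P | ℓ * linkThreshold m d (2 ^ k * (m / d)) ≤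
      |jdisc m d P (chainLink d (m / d) k n)|} ≤
        8 * 4 ^ (-ℓ) * exp (-linkEntropy d (2 ^ k * (m / d))) := by
  have : NeZero m := ⟨((NeZero.pos d).trans_le hdm).ne'⟩
  have hq := one_le_two_pow_mul_div hdm k
  set q : ℝ := 2 ^ k * (m / d)
  have hR := linkEntropy_nonneg (d := d) hq
  have ht : 2 * √(2 * m ^ d / q * (ℓ * linkEntropy d q)) + 2 * (ℓ * linkEntropy d q) ≤
      ℓ * linkThreshold m d q := by
    have hsqrt : √ℓ ≤ ℓ :=
      (sqrt_le_left (zero_le_one.trans hℓ)).2 (le_self_pow₀ hℓ two_ne_zero)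
    rw [mul_left_comm, sqrt_mul (zero_le_one.trans hℓ), linkThreshold, mul_add]
    grw [hsqrt]
    linarith
  calc (jitterMeasure m d).real _ ≤ 2 * exp (-(ℓ * linkEntropy d q)) :=
        measure_abs_jdisc_ge_le (measurableSet_chainLink _ _ _ _)
          (chainLink_subset_unitBox (by positivity) _ _) (by positivity)
          (variance_jdisc_chainLink_le hdm k hn) ht
    _ ≤ 2 * (4 * 4 ^ (-ℓ) * exp (-linkEntropy d q)) := by
        grw [exp_neg_mul_le_rpow_mul_exp_neg (log_four_le_linkEntropy hq) hℓ]
    _ = 8 * 4 ^ (-ℓ) * exp (-linkEntropy d q) := by ring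

theorem measure_iUnion_abs_jdisc_chainLink_ge_le (hd : 2 ≤ d) (hdm : d ≤ m) (hℓ : 1 ≤ ℓ) (K : ℕ) :
    (jitterMeasure m d).real (⋃ k ∈ Finset.range (K + 1),
      ⋃ n ∈ gridIndices d (2 ^ k * (m / d)), {P | ℓ * linkThreshold m d (2 ^ k * (m / d)) ≤
        |jdisc m d P (chainLink d (m / d) k n)|}) ≤ 4 ^ (-ℓ) / 25 := by
  have : NeZero d := ⟨by omega⟩
  have hlevel (k : ℕ) : (gridIndices d (2 ^ k * ((m : ℝ) / d))).card *
      exp (-linkEntropy d (2 ^ k * (m / d))) ≤ (1 / 2) ^ k / 400 := by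
    calc _ ≤ 1 / (400 * (2 ^ k * ((m : ℝ) / d))) :=
          card_gridIndices_mul_exp_neg_linkEntropy_le hd (one_le_two_pow_mul_div hdm k)
      _ ≤ 1 / (400 * (2 ^ k * 1)) := by
          gcongr
          simpa using one_le_two_pow_mul_div hdm 0
      _ = (1 / 2) ^ k / 400 := by rw [one_div_pow]; field_simp
  refine (measureReal_biUnion_finset_le _ _).trans ?_
  calc _ ≤ ∑ k ∈ Finset.range (K + 1), ∑ n ∈ gridIndices d (2 ^ k * ((m : ℝ) / d)),
        8 * 4 ^ (-ℓ) * exp (-linkEntropy d (2 ^ k * (m / d))) :=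
        Finset.sum_le_sum fun k _ => (measureReal_biUnion_finset_le _ _).trans <|
          Finset.sum_le_sum fun n hn => measure_abs_jdisc_chainLink_ge_le hdm hℓ k hn
    _ = 8 * 4 ^ (-ℓ) * ∑ k ∈ Finset.range (K + 1), (gridIndices d (2 ^ k * ((m : ℝ) / d))).card *
        exp (-linkEntropy d (2 ^ k * (m / d))) := by
        simp only [Finset.sum_const, nsmul_eq_mul, Finset.mul_sum, mul_left_comm]
    _ ≤ 8 * 4 ^ (-ℓ) * (2 / 400) := by
        grw [Finset.sum_le_sum fun k _ => hlevel k, ← Finset.sum_div, sum_geometric_two_le]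
    _ = 4 ^ (-ℓ) / 25 := by ring

end UnionBound

section ChainingSum

variable {m d K : ℕ} {B Λ : ℝ}

/-- An upper bound for `∑ k, (√2 / 2) ^ k * √(Λ + k * log 2)`, the sum that Gaussian deviations
contribute along the chain when `Λ` is the value of `log (4 * e * q)` at the coarsest resolution. -/
def chainingConstant (Λ : ℝ) : ℝ :=
  5 * (1 + √2 / 2) * √(2 * log 2) + √Λ * √2 / (√2 - 1)

theorem sqrt_two_div_two_lt_one : √2 / 2 < 1 := by
  rw [div_lt_one two_pos, sqrt_lt' two_pos]
  norm_num

theorem sum_sqrt_two_div_two_pow_le (K : ℕ) :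
    ∑ k ∈ Finset.range K, (√2 / 2) ^ k ≤ √2 / (√2 - 1) := by
  have h := hasSum_geometric_of_lt_one (by positivity) sqrt_two_div_two_lt_one
  refine (sum_le_hasSum _ (fun k _ => by positivity) h).trans_eq ?_
  have h2 : √2 ^ 2 = 2 := sq_sqrt zero_le_two
  rw [inv_eq_one_div, div_eq_div_iff (sub_pos.2 sqrt_two_div_two_lt_one).ne'
    (sub_ne_zero.2 (by norm_num))]
  linear_combination h2 / 2

theorem sum_mul_sqrt_two_div_two_pow_le (K : ℕ) :
    ∑ k ∈ Finset.range K, k * (√2 / 2) ^ k ≤ 5 * (1 + √2 / 2) := by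
  have hr := sqrt_two_div_two_lt_one
  have h := hasSum_coe_mul_geometric_of_norm_lt_one (r := √2 / 2)
    (by rwa [norm_of_nonneg (by positivity)])
  refine (sum_le_hasSum _ (fun k _ => by positivity) h).trans ?_
  rw [div_le_iff₀ (by nlinarith)]
  nlinarith [sq_sqrt (zero_le_two (α := ℝ)), sqrt_nonneg 2]

theorem sqrt_add_mul_log_two_le (hΛ : 0 ≤ Λ) (k : ℕ) :
    √(Λ + k * log 2) ≤ √Λ + k * √(2 * log 2) := by
  have hlog : 0 ≤ log 2 := log_nonneg one_le_two
  have hk : (k : ℝ) ≤ k ^ 2 := by exact_mod_cast Nat.le_self_pow two_ne_zero k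
  rw [sqrt_le_left (by positivity), add_sq, mul_pow, sq_sqrt hΛ, sq_sqrt (by positivity)]
  have : 0 ≤ 2 * √Λ * (k * √(2 * log 2)) := by positivity
  nlinarith

theorem sum_sqrt_two_div_two_pow_mul_sqrt_le (hΛ : 0 ≤ Λ) (K : ℕ) :
    ∑ k ∈ Finset.range K, (√2 / 2) ^ k * √(Λ + k * log 2) ≤ chainingConstant Λ := by
  calc ∑ k ∈ Finset.range K, (√2 / 2) ^ k * √(Λ + k * log 2)
      ≤ ∑ k ∈ Finset.range K, (√2 / 2) ^ k * (√Λ + k * √(2 * log 2)) := by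
        gcongr with k
        exact sqrt_add_mul_log_two_le hΛ k
    _ = (∑ k ∈ Finset.range K, k * (√2 / 2) ^ k) * √(2 * log 2) +
          √Λ * ∑ k ∈ Finset.range K, (√2 / 2) ^ k := by
        rw [Finset.sum_mul, Finset.mul_sum, ← Finset.sum_add_distrib]
        exact Finset.sum_congr rfl fun k _ => by ring
    _ ≤ 5 * (1 + √2 / 2) * √(2 * log 2) + √Λ * (√2 / (√2 - 1)) := by
        grw [sum_mul_sqrt_two_div_two_pow_le, sum_sqrt_two_div_two_pow_le]
    _ = chainingConstant Λ := by rw [chainingConstant, mul_div_assoc]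

theorem eight_le_chainingConstant (Λ : ℝ) : 8 ≤ chainingConstant Λ := by
  have hsqrt : 1.4 ≤ √2 := le_sqrt_of_sq_le (by norm_num)
  have hlog : 1 ≤ √(2 * log 2) := one_le_sqrt.2 (by linarith [log_two_gt_d9])
  have : 0 ≤ √Λ * √2 / (√2 - 1) := div_nonneg (by positivity) (by linarith)
  rw [chainingConstant]
  nlinarith

theorem sum_add_mul_log_two_le (hB : 1 ≤ B) (hK : 2 ^ K ≤ B) (hΛ : Λ ≤ 1.7 + 2 * log B) :
    ∑ k ∈ Finset.range (K + 1), (Λ + k * log 2) ≤ 9 * B := by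
  have hb : 0 ≤ log B := log_nonneg hB
  have hKb : K * log 2 ≤ log B := by
    rw [← log_pow]
    exact log_le_log (by positivity) hK
  have hK' : (K : ℝ) ≤ 1.45 * log B := by nlinarith [log_two_gt_d9, K.cast_nonneg (α := ℝ)]
  calc ∑ k ∈ Finset.range (K + 1), (Λ + k * log 2)
      ≤ ∑ _k ∈ Finset.range (K + 1), (1.7 + 3 * log B) := by
        refine Finset.sum_le_sum fun k hk => ?_
        have : (k : ℝ) * log 2 ≤ K * log 2 := by
          gcongr
          exact Nat.lt_succ_iff.1 (Finset.mem_range.1 hk)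
        linarith
    _ = (K + 1) * (1.7 + 3 * log B) := by simp [mul_add]
    _ ≤ (1.45 * log B + 1) * (1.7 + 3 * log B) := by gcongr
    _ ≤ 9 * (1 + log B + log B ^ 2 / 2) := by nlinarith
    _ ≤ 9 * B := by
        grw [quadratic_le_exp_of_nonneg hb, exp_log (zero_lt_one.trans_le hB)]

theorem linkEntropy_two_pow_mul (d k : ℕ) {q : ℝ} (hq : 0 < q) :
    linkEntropy d (2 ^ k * q) = 2 * d * (log (4 * exp 1 * q) + k * log 2) := by
  rw [linkEntropy, mul_left_comm, log_mul (by positivity) (by positivity), log_pow, add_comm]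

theorem linkThreshold_two_pow_mul_div [NeZero m] [NeZero d] (k : ℕ) :
    linkThreshold m d (2 ^ k * (m / d)) =
      4 * d * √(m ^ d / m) * ((√2 / 2) ^ k * √(log (4 * exp 1 * (m / d)) + k * log 2)) +
        4 * d * (log (4 * exp 1 * (m / d)) + k * log 2) := by
  have hm : (0 : ℝ) < m := Nat.cast_pos.2 (NeZero.pos m)
  have hd : (0 : ℝ) < d := Nat.cast_pos.2 (NeZero.pos d)
  rw [linkThreshold, linkEntropy_two_pow_mul d k (by positivity)]
  set L := log (4 * exp 1 * (m / d)) + k * log 2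
  have hr : (1 / 2 : ℝ) ^ k = ((√2 / 2) ^ k) ^ 2 := by
    rw [pow_right_comm, div_pow √2, sq_sqrt zero_le_two]
    norm_num
  have hsq : 2 * (m : ℝ) ^ d / (2 ^ k * (m / d)) * (2 * d * L) =
      (2 * d * (√2 / 2) ^ k) ^ 2 * (m ^ d / m * L) := by
    rw [mul_pow, ← hr, one_div_pow]
    field_simp
  rw [hsq, sqrt_mul (by positivity), sqrt_sq (by positivity), sqrt_mul (by positivity)]
  ring

theorem log_four_mul_exp_mul_div_le (hd : 2 ≤ d) (hdm : d ≤ m) :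
    log (4 * exp 1 * (m / d)) ≤ 1.7 + 2 * log √(m ^ d / m) := by
  have hd' : (2 : ℝ) ≤ d := mod_cast hd
  have hm' : (1 : ℝ) ≤ m := mod_cast (by omega : 1 ≤ m)
  have hpow : (m : ℝ) ≤ m ^ d / m := by
    rw [le_div_iff₀ (by positivity), ← sq]
    exact pow_le_pow_right₀ hm' hd
  calc log (4 * exp 1 * (m / d)) ≤ log (2 * exp 1 * (m ^ d / m)) := by
        refine log_le_log (by positivity) ?_
        calc 4 * exp 1 * ((m : ℝ) / d) ≤ 4 * exp 1 * ((m ^ d / m) / 2) := by gcongr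
          _ = 2 * exp 1 * (m ^ d / m) := by ring
    _ = log 2 + 1 + 2 * log √(m ^ d / m) := by
        rw [log_mul (by positivity) (by positivity), log_mul two_ne_zero (exp_ne_zero 1), log_exp,
          log_sqrt (by positivity)]
        ring
    _ ≤ 1.7 + 2 * log √(m ^ d / m) := by linarith [log_two_lt_d9]

theorem sum_linkThreshold_le (hd : 2 ≤ d) (hdm : d ≤ m) (hK : 2 ^ K ≤ √((m : ℝ) ^ d / m)) :
    ∑ k ∈ Finset.range (K + 1), linkThreshold m d (2 ^ k * (m / d)) ≤
      4 * d * √(m ^ d / m) * (chainingConstant (log (4 * exp 1 * (m / d))) + 9) := by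
  have : NeZero d := ⟨by omega⟩
  have : NeZero m := ⟨by omega⟩
  have hΛ : 0 ≤ log (4 * exp 1 * ((m : ℝ) / d)) :=
    log_nonneg <| one_le_mul_of_one_le_of_one_le
      (one_le_mul_of_one_le_of_one_le (by norm_num) (one_le_exp zero_le_one))
      (by simpa using one_le_two_pow_mul_div hdm 0)
  simp only [linkThreshold_two_pow_mul_div, Finset.sum_add_distrib, ← Finset.mul_sum]
  rw [← Finset.sum_add_distrib]
  grw [sum_sqrt_two_div_two_pow_mul_sqrt_le hΛ, sum_add_mul_log_two_le
    ((one_le_pow₀ one_le_two).trans hK) hK (log_four_mul_exp_mul_div_le hd hdm)]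
  exact le_of_eq (by ring)

end ChainingSum

theorem starDisc_lt_of_chainLink {m d K : ℕ} (hd : 2 ≤ d) (hdm : d ≤ m)
    (hK : 2 ^ K ≤ √((m : ℝ) ^ d / m)) (hK' : √((m : ℝ) ^ d / m) < 2 ^ (K + 1)) {ℓ : ℝ}
    (hℓ : 1 ≤ ℓ) {P : (Fin d → Fin m) → Fin d → ℝ}
    (hlink : ∀ k ≤ K, ∀ n ∈ gridIndices d (2 ^ k * (m / d)),
      |jdisc m d P (chainLink d (m / d) k n)| ≤ ℓ * linkThreshold m d (2 ^ k * (m / d))) :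
    starDisc m d P <
      ℓ * (10 * d * √(m ^ d / m) * chainingConstant (log (4 * exp 1 * (m / d)))) := by
  have : NeZero d := ⟨by omega⟩
  have hd0 : (0 : ℝ) < d := Nat.cast_pos.2 (NeZero.pos d)
  have hm0 : (0 : ℝ) < m := Nat.cast_pos.2 (by omega)
  have hB2 : √((m : ℝ) ^ d / m) ^ 2 = m ^ d / m := sq_sqrt (by positivity)
  set B := √((m : ℝ) ^ d / m)
  have hB : 0 < B := (by positivity : (0 : ℝ) < 2 ^ K).trans_le hK
  have hE := eight_le_chainingConstant (log (4 * exp 1 * ((m : ℝ) / d)))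
  set E := chainingConstant (log (4 * exp 1 * ((m : ℝ) / d)))
  have ht (k : ℕ) : 0 ≤ ℓ * linkThreshold m d (2 ^ k * (m / d)) := by
    have := linkEntropy_nonneg (d := d) (one_le_two_pow_mul_div hdm k)
    unfold linkThreshold
    positivity
  have hround : (m : ℝ) ^ d * (2 / (2 ^ K * (m / d))) ≤ 4 * d * B := by
    calc (m : ℝ) ^ d * (2 / (2 ^ K * (m / d))) = 2 * d * (B * B / 2 ^ K) := by
          rw [← sq, hB2]
          field_simp
      _ ≤ 2 * d * (B * 2 ^ (K + 1) / 2 ^ K) := by gcongr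
      _ = 4 * d * B := by
          field_simp
          ring
  calc starDisc m d P
      ≤ ∑ k ∈ Finset.range (K + 1), ℓ * linkThreshold m d (2 ^ k * (m / d)) +
          m ^ d * (2 / (2 ^ K * (m / d))) :=
        starDisc_le_of_chainLink (by simpa using one_le_two_pow_mul_div hdm 0) ht hlink
    _ ≤ ℓ * (4 * d * B * (E + 9)) + 4 * d * B := by
        rw [← Finset.mul_sum]
        grw [sum_linkThreshold_le hd hdm hK, hround]
    _ ≤ ℓ * (4 * d * B * (E + 9)) + ℓ * (4 * d * B) := by
        have := le_mul_of_one_le_left (by positivity : 0 ≤ 4 * d * B) hℓ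
        gcongr
    _ < ℓ * (10 * d * B * E) := by
        rw [← mul_add]
        gcongr
        nlinarith [mul_pos hd0 hB]

theorem five_le_two_rpow_mul_exp_div_sqrt_log_two :
    5 ≤ (2 : ℝ) ^ ((23 : ℝ) / 12) * exp (1 / 6) / √(log 2) := by
  have hpow : (3.7 : ℝ) ≤ 2 ^ ((23 : ℝ) / 12) := by
    refine le_of_pow_le_pow_left₀ (n := 12) (by norm_num) (by positivity) ?_
    rw [← rpow_mul_natCast zero_le_two]
    norm_num
  have hexp : (1.16 : ℝ) ≤ exp (1 / 6) := by linarith [add_one_le_exp (1 / 6 : ℝ)]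
  have hsqrt : √(log 2) ≤ 0.84 := sqrt_le_iff.2 ⟨by norm_num, by linarith [log_two_lt_d9]⟩
  rw [le_div_iff₀ (sqrt_pos.2 (log_pos one_lt_two))]
  calc 5 * √(log 2) ≤ 3.7 * 1.16 := by linarith
    _ ≤ 2 ^ ((23 : ℝ) / 12) * exp (1 / 6) := by gcongr

theorem jittered_sampling_tail_bound_general (m d : ℕ) (hd : 2 ≤ d) (hmd : d ≤ m)
    (C : ℝ) (hC : 5 ≤ C)
    (D : ℝ) (hD : D = 2 * C * d * √((m : ℝ) ^ d / m) *
      (5 * (1 + √2 / 2) * √(2 * log 2) + √(log (4 * exp 1 * m / d)) * √2 / (√2 - 1))) :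
    ∀ ℓ : ℝ, 1 ≤ ℓ →
      jitterMeasure m d {P | ℓ * D ≤ starDisc m d P} ≤ ENNReal.ofReal ((4 : ℝ) ^ (-ℓ) / 25) := by
  intro ℓ hℓ
  have : NeZero m := ⟨by omega⟩
  have hm : (1 : ℝ) ≤ m := Nat.one_le_cast.2 NeZero.one_le
  have hB : 1 ≤ √((m : ℝ) ^ d / m) :=
    one_le_sqrt.2 ((one_le_div (by positivity)).2 (le_self_pow₀ hm (by omega)))
  obtain ⟨K, hK, hK'⟩ := exists_nat_pow_near hB one_lt_two
  have hD' : 10 * d * √((m : ℝ) ^ d / m) * chainingConstant (log (4 * exp 1 * (m / d))) ≤ D := by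
    have := eight_le_chainingConstant (log (4 * exp 1 * ((m : ℝ) / d)))
    rw [hD, mul_div_assoc (4 * exp 1), ← chainingConstant]
    gcongr
    linarith
  refine le_trans (measure_mono fun P (hP : ℓ * D ≤ starDisc m d P) => ?_) <|
    (ENNReal.le_ofReal_iff_toReal_le (measure_ne_top _ _) (by positivity)).2
      (measure_iUnion_abs_jdisc_chainLink_ge_le hd hmd hℓ K)
  by_contra hbad
  simp only [Set.mem_iUnion, Finset.mem_range, not_exists] at hbad
  refine (starDisc_lt_of_chainLink hd hmd hK hK' hℓ fun k hk n hn => ?_).not_ge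
    (le_trans (by gcongr) hP)
  exact (not_le.1 (hbad k (Nat.lt_succ_of_le hk) n hn)).le

/-- Tail bound for the star discrepancy of jittered sampling (key estimate in the proof of the
upper bound): with `C = 2^(23/12)·e^(1/6)/√(ln 2)`, `K = ⌊((d−1)/2)·log₂ m⌋`,
`δ_K = 2^(−K)·d/m` and
`D = 2·C·d·√(N/m)·(5(1 + √2/2)·√(2 ln 2) + √(ln(4e·m/d))·√2/(√2 − 1))`, we have
`Pr[D*(P) ≥ ℓ·D + N·δ_K] ≤ 3.7·4^(−ℓ)` for all real `ℓ ≥ 1`. -/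
theorem jittered_sampling_tail_bound (m d : ℕ) (hd : 2 ≤ d) (hmd : d ≤ m)
    (C : ℝ) (hC : C = (2 : ℝ) ^ ((23 : ℝ) / 12) * Real.exp (1 / 6) / Real.sqrt (Real.log 2))
    (K : ℕ) (hK : K = ⌊((d : ℝ) - 1) / 2 * Real.logb 2 m⌋₊)
    (δK : ℝ) (hδK : δK = ((2 : ℝ) ^ K)⁻¹ * ((d : ℝ) / m))
    (D : ℝ) (hD : D = 2 * C * d * Real.sqrt ((m : ℝ) ^ d / m) *
      (5 * (1 + Real.sqrt 2 / 2) * Real.sqrt (2 * Real.log 2) +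
        Real.sqrt (Real.log (4 * Real.exp 1 * m / d)) * Real.sqrt 2 / (Real.sqrt 2 - 1))) :
    ∀ ℓ : ℝ, 1 ≤ ℓ →
      jitterMeasure m d {P | ℓ * D + (m : ℝ) ^ (d : ℕ) * δK ≤ starDisc m d P}
        ≤ ENNReal.ofReal (3.7 * (4 : ℝ) ^ (-ℓ)) := by
  intro ℓ hℓ
  have hδK0 : 0 ≤ (m : ℝ) ^ d * δK := by rw [hδK]; positivity
  calc jitterMeasure m d {P | ℓ * D + (m : ℝ) ^ d * δK ≤ starDisc m d P}
      ≤ jitterMeasure m d {P | ℓ * D ≤ starDisc m d P} :=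
        measure_mono fun P hP => (le_add_of_nonneg_right hδK0).trans hP
    _ ≤ ENNReal.ofReal (4 ^ (-ℓ) / 25) := jittered_sampling_tail_bound_general m d hd hmd C
        (five_le_two_rpow_mul_exp_div_sqrt_log_two.trans_eq hC.symm) D hD ℓ hℓ
    _ ≤ ENNReal.ofReal (3.7 * 4 ^ (-ℓ)) := by
        have : 0 < (4 : ℝ) ^ (-ℓ) := by positivity
        gcongr
        linarith
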